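/- Let G be a simple 2-connected graph with minimum degree δ and at least 3 vertices. Then G contains either a cycle of length at least 2δ or a Hamilton cycle. -/

import Mathlib

open SimpleGraph

/-- A graph is 2-connected: at least 3 vertices and deleting any one vertex
leaves a connected graph (no cut vertex). -/
def TwoConnected {V : Type*} [Fintype V] (G : SimpleGraph V) : Prop :=
  3 ≤ Fintype.card V ∧ ∀ v : V, (SimpleGraph.induce ({v}ᶜ : Set V) G).Connected

namespace SimpleGraph

variable {V : Type*} {G : SimpleGraph V}

namespace Walk

lemma IsPath.append_of_inter {u v w : V} {p : G.Walk u v} {q : G.Walk v w} (hp : p.IsPath)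
    (hq : q.IsPath) (h : ∀ x ∈ p.support, x ∈ q.support → x = v) : (p.append q).IsPath := by
  rw [isPath_def, support_append, List.nodup_append']
  refine ⟨hp.support_nodup, hq.support_nodup.tail, fun x hx hx' => ?_⟩
  have hn := hq.support_nodup
  rw [← cons_tail_support] at hn
  obtain rfl := h x hx (List.mem_of_mem_tail hx')
  exact (List.nodup_cons.1 hn).1 hx'

/-- A path that returns to its start only at its start. -/
lemma IsPath.start_notMem_dropUntil [DecidableEq V] {u v y : V} {p : G.Walk u v} (hp : p.IsPath)
    (hy : y ∈ p.support) (hne : y ≠ u) : u ∉ (p.dropUntil y hy).support := by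
  intro hu
  have h := p.take_spec hy ▸ hp
  exact h.ne_of_mem_support_of_append hne.symm (start_mem_support _) hu rfl

lemma card_le_length_of_subset_support [DecidableEq V] {u : V} {c : G.Walk u u} (hc : ¬ c.Nil)
    {S : Finset V} (hS : ∀ x ∈ S, x ∈ c.support) : S.card ≤ c.length := by
  have : S ⊆ c.support.tail.toFinset := by
    intro x hx
    have := hS x hx
    rw [mem_support_iff] at this
    rw [List.mem_toFinset]
    rcases this with rfl | h
    · exact end_mem_tail_support hc
    · exact h
  calc S.card ≤ _ := Finset.card_le_card this
    _ ≤ _ := List.toFinset_card_le _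
    _ = _ := by simp

/-- Two paths that meet only at their common endpoints form a cycle through both. -/
lemma IsPath.exists_isCycle_of_inter [DecidableEq V] {u v : V} {p : G.Walk u v} {q : G.Walk v u}
    (hp : p.IsPath) (hq : q.IsPath) (hne : u ≠ v)
    (h : ∀ x ∈ p.support, x ∈ q.support → x = u ∨ x = v)
    {S : Finset V} (hS : ∀ x ∈ S, x ∈ p.support ∨ x ∈ q.support) (hcard : 2 < S.card) :
    ∃ (w : V) (c : G.Walk w w), c.IsCycle ∧ S.card ≤ c.length := by
  have hnil : ¬ (p.append q).Nil := by
    have : ¬ p.Nil := fun hn => hne hn.eq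
    simp [this]
  have hlen : S.card ≤ (p.append q).length :=
    card_le_length_of_subset_support hnil (by simpa using hS)
  refine ⟨u, p.append q, hp.isCycle_append hq (fun x hx hx' => ?_) ?_, hlen⟩
  · have hnp := hp.support_nodup
    have hnq := hq.support_nodup
    rw [← cons_tail_support] at hnp hnq
    rcases h x (List.mem_of_mem_tail hx) (List.mem_of_mem_tail hx') with rfl | rfl
    · exact (List.nodup_cons.1 hnp).1 hx
    · exact (List.nodup_cons.1 hnq).1 hx'
  · rw [length_append] at hlen
    omega

/-- A walk between two sets contains a path between them with no interior vertex in either set. -/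
lemma exists_isPath_forall_mem [DecidableEq V] {u v : V} (w : G.Walk u v) {A B : Set V}
    (hu : u ∈ A) (hv : v ∈ B) :
    ∃ (x y : V) (p : G.Walk x y), p.IsPath ∧ x ∈ A ∧ y ∈ B ∧ (∀ z ∈ p.support, z ∈ w.support) ∧
      (∀ z ∈ p.support, z ∈ A → z = x) ∧ ∀ z ∈ p.support, z ∈ B → z = y := by
  induction hn : w.length using Nat.strong_induction_on generalizing u v with
  | _ n ih =>
  subst hn
  by_cases hA : ∃ z ∈ w.support, z ∈ A ∧ z ≠ u
  · obtain ⟨z, hz, hzA, hzu⟩ := hA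
    obtain ⟨x, y, p, hp, hx, hy, hs, h⟩ :=
      ih _ (length_dropUntil_lt_length hz hzu) (w.dropUntil z hz) hzA hv rfl
    exact ⟨x, y, p, hp, hx, hy, fun t ht => w.support_dropUntil_subset_support hz (hs t ht), h⟩
  by_cases hB : ∃ z ∈ w.support, z ∈ B ∧ z ≠ v
  · obtain ⟨z, hz, hzB, hzv⟩ := hB
    obtain ⟨x, y, p, hp, hx, hy, hs, h⟩ :=
      ih _ (length_takeUntil_lt_length hz hzv) (w.takeUntil z hz) hu hzB rfl
    exact ⟨x, y, p, hp, hx, hy, fun t ht => w.support_takeUntil_subset_support hz (hs t ht), h⟩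
  push Not at hA hB
  have hsub := w.support_bypass_subset_support
  exact ⟨u, v, w.bypass, w.bypass_isPath, hu, hv, hsub, fun z hz => hA z (hsub hz),
    fun z hz => hB z (hsub hz)⟩

lemma IsPath.exists_segment {u v : V} {p : G.Walk u v} (hp : p.IsPath) {i j : ℕ} (hij : i ≤ j)
    (hj : j ≤ p.length) :
    ∃ q : G.Walk (p.getVert i) (p.getVert j), q.IsPath ∧
      ∀ x, x ∈ q.support ↔ ∃ k, i ≤ k ∧ k ≤ j ∧ p.getVert k = x := by
  have hend : (p.drop i).getVert (j - i) = p.getVert j := by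
    rw [drop_getVert, Nat.add_sub_cancel' hij]
  refine ⟨((p.drop i).take (j - i)).copy rfl hend, ?_, fun x => ?_⟩
  · rw [isPath_copy]
    exact (hp.drop i).take _
  · rw [support_copy, mem_support_iff_exists_getVert]
    constructor
    · rintro ⟨n, rfl, hn⟩
      rw [take_length] at hn
      exact ⟨i + n, by omega, by omega, by
        rw [take_getVert, drop_getVert, min_eq_right (by omega)]⟩
    · rintro ⟨k, h1, h2, rfl⟩
      refine ⟨k - i, ?_, ?_⟩
      · rw [take_getVert, drop_getVert, min_eq_right (by omega), Nat.add_sub_cancel' h1]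
      · rw [take_length, drop_length]
        omega

/-- If no single vertex separates `A` from `B`, an `A`-`B` path can be augmented to two disjoint
`A`-`B` paths whose endpoints include those of the given path. -/
theorem IsPath.exists_disjoint_paths [DecidableEq V] {A : Set V} {a b : V} {Q : G.Walk a b}
    (hQ : Q.IsPath) (B : Set V)
    (hsep : ∀ v, ∃ x ∈ A, ∃ y ∈ B, ∃ w : G.Walk x y, v ∉ w.support)
    (haA : a ∈ A) (hbB : b ∈ B) (hQA : ∀ z ∈ Q.support, z ∈ A → z = a)
    (hQB : ∀ z ∈ Q.support, z ∈ B → z = b) :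
    ∃ (s t y : V) (p : G.Walk s b) (q : G.Walk t y), p.IsPath ∧ q.IsPath ∧ s ∈ A ∧ t ∈ A ∧
      (s = a ∨ t = a) ∧ y ∈ B ∧ (∀ z ∈ p.support, z ∉ q.support) ∧
      (∀ z ∈ p.support, z ∈ A → z = s) ∧ (∀ z ∈ p.support, z ∈ B → z = b) ∧
      (∀ z ∈ q.support, z ∈ A → z = t) ∧ ∀ z ∈ q.support, z ∈ B → z = y := by
  induction hn : Q.length using Nat.strong_induction_on generalizing b B with
  | _ n ih =>
  subst hn
  obtain ⟨x₀, hx₀, y₀, hy₀, w, hbw⟩ := hsep b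
  obtain ⟨x, q, T, hT, hx, hq, hTw, hTA, hTB⟩ :=
    w.exists_isPath_forall_mem (A := A ∪ {z | z ∈ Q.support}) (B := B) (Or.inl hx₀) hy₀
  have hbT : b ∉ T.support := fun h => hbw (hTw b h)
  by_cases hxQ : x ∈ Q.support
  swap
  · refine ⟨a, x, q, Q, T, hQ, hT, haA, hx.resolve_right hxQ, Or.inl rfl, hq, ?_, hQA, hQB,
      fun z hz hzA => hTA z hz (Or.inl hzA), hTB⟩
    intro z hz hzT
    exact hxQ (hTA z hzT (Or.inr hz) ▸ hz)
  have hxb : x ≠ b := fun h => hbT (h ▸ T.start_mem_support)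
  have hxB : x ∉ B := fun h => hxb (hQB x hxQ h)
  have hTQ : ∀ z ∈ T.support, z ∈ Q.support → z = x := fun z hz hzQ => hTA z hz (Or.inr hzQ)
  have hTA' : ∀ z ∈ T.support, z ∈ A → z = x := fun z hz hzA => hTA z hz (Or.inl hzA)
  set Q₁ := Q.takeUntil x hxQ
  set Q₂ := Q.dropUntil x hxQ
  have hQ₁Q : ∀ z ∈ Q₁.support, z ∈ Q.support := Q.support_takeUntil_subset_support hxQ
  have hQ₂Q : ∀ z ∈ Q₂.support, z ∈ Q.support := Q.support_dropUntil_subset_support hxQ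
  have hspec : (Q₁.append Q₂).IsPath := (Q.take_spec hxQ).symm ▸ hQ
  have hQ₁₂ : ∀ z ∈ Q₁.support, z ∈ Q₂.support → z = x := by
    intro z hz hz'
    by_contra hne
    exact hspec.ne_of_mem_support_of_append hne hz hz' rfl
  have hbQ₁ : b ∉ Q₁.support := fun h => hxb (hQ₁₂ b h Q₂.end_mem_support).symm
  have haQ₂ : a ∈ Q₂.support → a = x := fun h => hQ₁₂ a Q₁.start_mem_support h
  have hQ₂A : ∀ z ∈ Q₂.support, z ∈ A → z = x := by
    intro z hz hzA
    have := hQA z (hQ₂Q z hz) hzA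
    rw [this] at hz ⊢
    exact haQ₂ hz
  have hQ₁p : Q₁.IsPath := hspec.of_append_left
  have hQ₂p : Q₂.IsPath := hspec.of_append_right
  obtain ⟨s, t, y, W₁, W₂, hW₁, hW₂, hsA, htA, hst, hy, hdisj, hW₁A, hW₁B, hW₂A, hW₂B⟩ :=
    ih _ (length_takeUntil_lt_length hxQ hxb) (b := x) (Q := Q₁) hQ₁p
      (B ∪ {z | z ∈ Q₂.support} ∪ {z | z ∈ T.support})
      (fun v => by
        obtain ⟨x, hx, y, hy, w⟩ := hsep v
        exact ⟨x, hx, y, Or.inl (Or.inl hy), w⟩)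
      (Or.inr T.start_mem_support) (fun z hz => hQA z (hQ₁Q z hz))
      (by
        rintro z hz ((hzB | hzQ) | hzT)
        · exact absurd (hQB z (hQ₁Q z hz) hzB ▸ hz) hbQ₁
        · exact hQ₁₂ z hz hzQ
        · exact hTQ z hzT (hQ₁Q z hz)) rfl
  have hyx : y ≠ x := by
    rintro rfl
    exact hdisj _ W₁.end_mem_support W₂.end_mem_support
  simp only [Set.mem_union, Set.mem_ofPred_eq] at hy hW₁B hW₂B
  have hQ₂B : ∀ z ∈ Q₂.support, z ∈ B → z = b := fun z hz => hQB z (hQ₂Q z hz)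
  have hTQ₂ : ∀ z ∈ T.support, z ∈ Q₂.support → z = x := fun z hz hz' => hTQ z hz (hQ₂Q z hz')
  have hW₁Q : ∀ z ∈ W₁.support, z ∈ Q₂.support → z = x := fun z hz h => hW₁B z hz (by tauto)
  have hW₁T : ∀ z ∈ W₁.support, z ∈ T.support → z = x := fun z hz h => hW₁B z hz (by tauto)
  have hW₁B' : ∀ z ∈ W₁.support, z ∉ B := fun z hz h => hxB (hW₁B z hz (by tauto) ▸ h)
  have hW₂Q : ∀ z ∈ W₂.support, z ∈ Q₂.support → z = y := fun z hz h => hW₂B z hz (by tauto)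
  have hW₂T : ∀ z ∈ W₂.support, z ∈ T.support → z = y := fun z hz h => hW₂B z hz (by tauto)
  have hW₂B' : ∀ z ∈ W₂.support, z ∈ B → z = y := fun z hz h => hW₂B z hz (by tauto)
  have hxW₁ := W₁.end_mem_support
  have hyW₂ := W₂.end_mem_support
  have hbQ₂ := Q₂.end_mem_support
  have hxQ₂ := Q₂.start_mem_support
  have hxT := T.start_mem_support
  clear_value Q₁ Q₂
  clear hsep ih hQA hQB hW₁B hW₂B hspec hQ₁₂ hQ₁Q hQ₂Q hTA hTQ hbQ₁ haQ₂ hTw hbw hQ₁p hx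
  by_cases hyQ : y ∈ Q₂.support
  · have hxE : x ∉ (Q₂.dropUntil y hyQ).support := hQ₂p.start_notMem_dropUntil hyQ hyx
    have hE := Q₂.support_dropUntil_subset_support hyQ
    have hEp := hQ₂p.dropUntil hyQ
    generalize Q₂.dropUntil y hyQ = E at *
    have hE' : ∀ z ∈ E.support, z ∈ Q₂.support ∧ z ≠ x := fun z hz => ⟨hE hz, by grind⟩
    clear hE hxE
    refine ⟨t, s, q, W₂.append E, W₁.append T, hW₂.append_of_inter hEp ?_,
      hW₁.append_of_inter hT ?_, htA, hsA, hst.symm, hq, ?_, ?_, ?_, ?_, ?_⟩ <;>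
      (try simp only [mem_support_append_iff]) <;> grind only
  by_cases hyT : y ∈ T.support
  · have hxE : x ∉ (T.dropUntil y hyT).support := hT.start_notMem_dropUntil hyT hyx
    have hE := T.support_dropUntil_subset_support hyT
    have hEp := hT.dropUntil hyT
    generalize T.dropUntil y hyT = E at *
    have hE' : ∀ z ∈ E.support, z ∈ T.support ∧ z ≠ x := fun z hz => ⟨hE hz, by grind⟩
    clear hE hxE
    refine ⟨s, t, q, W₁.append Q₂, W₂.append E, hW₁.append_of_inter hQ₂p ?_,
      hW₂.append_of_inter hEp ?_, hsA, htA, hst, hq, ?_, ?_, ?_, ?_, ?_⟩ <;>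
      (try simp only [mem_support_append_iff]) <;> grind only
  · refine ⟨s, t, y, W₁.append Q₂, W₂, hW₁.append_of_inter hQ₂p ?_,
      hW₂, hsA, htA, hst, hy.elim (fun h => h.resolve_right hyQ) (absurd · hyT), ?_, ?_, ?_, ?_, ?_⟩ <;>
      (try simp only [mem_support_append_iff]) <;> grind only

/-- Along a path `R` from `x` to a neighbour of `x`, any other vertex of `R` is joined to the end
of `R` by a path inside `R` through `x` and all neighbours of `x` on `R`. -/
lemma IsPath.exists_isPath_neighbors [DecidableEq V] {x y t : V} {R : G.Walk x y} (hR : R.IsPath)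
    (hxy : G.Adj x y) (ht : t ∈ R.support) (hty : t ≠ y) :
    ∃ X : G.Walk t y, X.IsPath ∧ (∀ z ∈ X.support, z ∈ R.support) ∧
      ∀ z ∈ R.support, z = x ∨ G.Adj x z → z ∈ X.support := by
  obtain ⟨i, rfl, hi⟩ := mem_support_iff_exists_getVert.1 ht
  have hi' : i < R.length := by
    refine lt_of_le_of_ne hi fun h => hty ?_
    rw [h, getVert_length]
  have hex : ∃ j, i < j ∧ j ≤ R.length ∧ G.Adj x (R.getVert j) :=
    ⟨R.length, hi', le_rfl, by rwa [getVert_length]⟩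
  classical
  obtain ⟨hij, hj, hadj⟩ := Nat.find_spec hex
  have hmin := fun k => Nat.find_min hex (m := k)
  set j := Nat.find hex
  obtain ⟨p, hp, hps⟩ := hR.exists_segment (Nat.zero_le i) hi
  obtain ⟨q, hq, hqs⟩ := hR.exists_segment hj le_rfl
  have hinj := hR.getVert_injOn
  simp only [Nat.zero_le, true_and] at hps
  have h0 : x = R.getVert 0 := R.getVert_zero.symm
  have hadj' : G.Adj (R.getVert 0) (R.getVert j) := by rwa [getVert_zero]
  have hdisj : ∀ z ∈ p.support, z ∉ q.support := by
    intro z hz hz'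
    obtain ⟨k, hk, rfl⟩ := (hps z).1 hz
    obtain ⟨l, hl, hl', hkl⟩ := (hqs _).1 hz'
    have := hinj (show l ≤ R.length from hl') (show k ≤ R.length by omega) hkl
    omega
  have hc : (cons hadj' q).IsPath :=
    hq.cons (hdisj _ p.start_mem_support)
  refine ⟨(p.reverse.append (cons hadj' q)).copy rfl R.getVert_length, ?_, ?_, ?_⟩
  · rw [isPath_copy]
    refine hp.reverse.append_of_inter hc fun z hz hz' => ?_
    rw [support_cons, List.mem_cons] at hz'
    exact hz'.resolve_right (hdisj z (by simpa using hz))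
  · intro z hz
    simp only [support_copy, mem_support_append_iff, support_reverse, List.mem_reverse,
      support_cons, List.mem_cons, hps, hqs] at hz
    rcases hz with ⟨k, -, rfl⟩ | rfl | ⟨k, -, -, rfl⟩ <;> exact getVert_mem_support ..
  · intro z hz hxz
    obtain ⟨k, rfl, hk⟩ := mem_support_iff_exists_getVert.1 hz
    simp only [support_copy, mem_support_append_iff, support_reverse, List.mem_reverse,
      support_cons, List.mem_cons, hps, hqs]
    rcases hxz with hxz | hxz
    · exact Or.inr (Or.inl (hxz.trans h0))
    by_cases hki : k ≤ i
    · exact Or.inl ⟨k, hki, rfl⟩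
    refine Or.inr (Or.inr ⟨k, ?_, hk, rfl⟩)
    by_contra hkj
    exact hmin k (by omega) ⟨by omega, hk, hxz⟩

lemma IsPath.exists_isCycle_of_crossing [DecidableEq V] {u v : V} {P : G.Walk u v} (hP : P.IsPath)
    {i j : ℕ} (hij : i < j) (hj : j ≤ P.length) (hu : G.Adj u (P.getVert j))
    (hv : G.Adj v (P.getVert i)) (hcard : 2 < (i + 1) + (P.length + 1 - j)) :
    ∃ (w : V) (c : G.Walk w w), c.IsCycle ∧ (i + 1) + (P.length + 1 - j) ≤ c.length := by
  obtain ⟨p, hp, hps⟩ := hP.exists_segment (Nat.zero_le i) (by omega)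
  obtain ⟨q, hq, hqs⟩ := hP.exists_segment hj le_rfl
  have hinj := hP.getVert_injOn
  have hinj' : ∀ k l, k ≤ P.length → l ≤ P.length → P.getVert k = P.getVert l → k = l :=
    fun k l hk hl h => hinj hk hl h
  have h0 := P.getVert_zero
  have hm := P.getVert_length
  have huv : P.getVert 0 ≠ P.getVert P.length := fun h => by
    have := hinj' _ _ (by omega) le_rfl h
    omega
  have hv' : G.Adj (P.getVert i) (P.getVert P.length) := by rw [hm]; exact hv.symm
  have hu' : G.Adj (P.getVert j) (P.getVert 0) := by rw [h0]; exact hu.symm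
  have hS : ((Finset.range (i + 1) ∪ Finset.Icc j P.length).image P.getVert).card =
      (i + 1) + (P.length + 1 - j) := by
    rw [Finset.card_image_of_injOn, Finset.card_union_of_disjoint, Finset.card_range,
      Nat.card_Icc]
    · rw [Finset.disjoint_left]
      intro k hk hk'
      simp only [Finset.mem_range, Finset.mem_Icc] at hk hk'
      omega
    · intro k hk l hl h
      simp only [Finset.coe_union, Finset.coe_range, Finset.coe_Icc, Set.mem_union, Set.mem_Iio,
        Set.mem_Icc] at hk hl
      exact hinj' k l (by omega) (by omega) h
  rw [← hS] at hcard ⊢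
  refine (hp.concat (w := P.getVert P.length) ?_ hv').exists_isCycle_of_inter
    (hq.reverse.concat (w := P.getVert 0) ?_ hu') huv ?_ ?_ hcard
  · rw [hps]
    rintro ⟨k, -, hk, h⟩
    have := hinj' _ _ (by omega) (by omega) h
    omega
  · rw [support_reverse, List.mem_reverse, hqs]
    rintro ⟨k, hk, hk', h⟩
    have := hinj' _ _ (by omega) (by omega) h
    omega
  · simp only [support_concat, support_reverse, List.mem_append,
      List.mem_reverse, hps, hqs, List.mem_singleton]
    rintro z (⟨k, -, hk, rfl⟩ | rfl) hz
    · rcases hz with ⟨l, hl, hl', h⟩ | h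
      · have := hinj' _ _ (by omega) (by omega) h
        omega
      · exact Or.inl h
    · exact Or.inr rfl
  · simp only [support_concat, support_reverse, List.mem_append,
      List.mem_reverse, hps, hqs, List.mem_singleton, Finset.mem_image, Finset.mem_union,
      Finset.mem_range, Finset.mem_Icc]
    rintro z ⟨k, hk | hk, rfl⟩
    · exact Or.inl (Or.inl ⟨k, by omega, by omega, rfl⟩)
    · exact Or.inr (Or.inl ⟨k, hk.1, hk.2, rfl⟩)

/-- In a connected graph, a cycle with more vertices than any path has edges is Hamiltonian. -/
lemma IsCycle.isHamiltonian_of_forall_isPath [Fintype V] [DecidableEq V] (hG : G.Connected) {w : V}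
    {c : G.Walk w w} (hc : c.IsCycle)
    (hmax : ∀ (u v : V) (p : G.Walk u v), p.IsPath → p.length < c.length) : G.IsHamiltonian := by
  have hmem : ∀ y, y ∈ c.support := by
    by_contra! h
    obtain ⟨y, hy⟩ := h
    obtain ⟨r⟩ := hG.preconnected w y
    obtain ⟨d, -, hd, hd'⟩ := r.exists_boundary_dart {z | z ∈ c.support} c.start_mem_support hy
    have hc' : (c.rotate d.fst hd).IsCycle := hc.rotate hd
    have hp := hc'.isPath_tail.concat (w := d.snd) (fun h => hd' ?_) d.adj
    · have := hmax _ _ _ hp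
      rw [length_concat, length_tail_add_one hc'.not_nil, length_rotate] at this
      omega
    · have := List.mem_of_mem_tail (support_tail_of_not_nil _ hc'.not_nil ▸ h)
      simpa using this
  refine fun _ => ⟨w, c, isHamiltonianCycle_iff_isCycle_and_length_eq.2 ⟨hc, le_antisymm ?_ ?_⟩⟩
  · have := hc.isPath_tail.length_lt
    have := length_tail_add_one hc.not_nil
    omega
  · exact card_le_length_of_subset_support hc.not_nil fun x _ => hmem x

end Walk
end SimpleGraph

namespace TwoConnected

variable {V : Type*} [Fintype V] {G : SimpleGraph V}

lemma exists_walk (h : TwoConnected G) {v x y : V} (hx : x ≠ v) (hy : y ≠ v) :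
    ∃ w : G.Walk x y, v ∉ w.support := by
  obtain ⟨r⟩ := (h.2 v).preconnected ⟨x, hx⟩ ⟨y, hy⟩
  have hr : v ∉ (r.map (Embedding.induce _).toHom).support := by
    rw [Walk.support_map, List.mem_map]
    rintro ⟨z, -, hz⟩
    exact z.2 hz
  exact ⟨_, hr⟩

lemma exists_ne_ne (h : TwoConnected G) (x y : V) : ∃ z, z ≠ x ∧ z ≠ y := by
  classical
  have := h.1
  obtain ⟨z, hz⟩ := Finset.exists_mem_notMem_of_card_lt_card
    (s := {x, y}) (t := (Finset.univ : Finset V))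
    (lt_of_le_of_lt Finset.card_le_two (by rw [Finset.card_univ]; omega))
  exact ⟨z, by simpa [not_or] using hz.2⟩

lemma connected (h : TwoConnected G) : G.Connected := by
  have : Nonempty V := Fintype.card_pos_iff.1 (by have := h.1; omega)
  refine ⟨fun x y => ?_⟩
  obtain ⟨z, hx, hy⟩ := h.exists_ne_ne x y
  obtain ⟨w, -⟩ := h.exists_walk hx.symm hy.symm
  exact ⟨w⟩

lemma exists_adj_ne (h : TwoConnected G) {v w : V} (hvw : v ≠ w) : ∃ u, G.Adj v u ∧ u ≠ w := by
  obtain ⟨z, hz, hzw⟩ := h.exists_ne_ne v w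
  obtain ⟨r, hr⟩ := h.exists_walk hvw hzw
  cases r with
  | nil => exact absurd rfl hz
  | cons hadj r =>
    refine ⟨_, hadj, ?_⟩
    rintro rfl
    exact hr (by simp)

lemma two_le_minDegree (h : TwoConnected G) [DecidableRel G.Adj] : 2 ≤ G.minDegree := by
  have := h.connected.nonempty
  refine G.le_minDegree_of_forall_le_degree 2 fun v => ?_
  obtain ⟨x, hx, -⟩ := h.exists_ne_ne v v
  obtain ⟨y, hy, -⟩ := h.exists_adj_ne hx.symm
  obtain ⟨z, hz, hzy⟩ := h.exists_adj_ne hy.ne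
  rw [← card_neighborFinset_eq_degree]
  exact Finset.one_lt_card.2 ⟨y, by simpa using hy, z, by simpa using hz, hzy.symm⟩

variable [DecidableEq V] [DecidableRel G.Adj]

/-- If the neighbours of the two ends of a longest path cross, there is a long or Hamiltonian
cycle. -/
lemma exists_isCycle_of_crossing (h : TwoConnected G) {u v : V} {P : G.Walk u v} (hP : P.IsPath)
    (hmax : ∀ (x y : V) (p : G.Walk x y), p.IsPath → p.length ≤ P.length)
    (hu : ∀ z, G.Adj u z → z ∈ P.support) (hv : ∀ z, G.Adj v z → z ∈ P.support)
    (hcross : ∃ i j, i < j ∧ j ≤ P.length ∧ G.Adj u (P.getVert j) ∧ G.Adj v (P.getVert i)) :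
    (∃ (w : V) (c : G.Walk w w), c.IsCycle ∧ 2 * G.minDegree ≤ c.length) ∨
      G.IsHamiltonian := by
  have hex : ∃ d, ∃ i, 0 < d ∧ i + d ≤ P.length ∧ G.Adj u (P.getVert (i + d)) ∧
      G.Adj v (P.getVert i) := by
    obtain ⟨i, j, hij, hj, h1, h2⟩ := hcross
    exact ⟨j - i, i, by omega, by omega, by rwa [Nat.add_sub_cancel' hij.le], h2⟩
  classical
  obtain ⟨i, hd, hid, hui, hvi⟩ := Nat.find_spec hex
  have hmin : ∀ k l, k < l → l ≤ P.length → G.Adj u (P.getVert l) → G.Adj v (P.getVert k) →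
      Nat.find hex ≤ l - k := fun k l hkl hl h1 h2 =>
    Nat.find_min' hex ⟨k, by omega, by omega, by rwa [Nat.add_sub_cancel' hkl.le], h2⟩
  set d := Nat.find hex
  have hδ := h.two_le_minDegree
  set Nu := (Finset.range P.length).filter fun k => G.Adj u (P.getVert (k + 1)) with hNu
  set Nv := (Finset.range P.length).filter fun k => G.Adj v (P.getVert k) with hNv
  have hcu : G.minDegree ≤ Nu.card := by
    refine (G.minDegree_le_degree u).trans ?_
    rw [← card_neighborFinset_eq_degree]
    refine (Finset.card_le_card (t := Nu.image fun k => P.getVert (k + 1)) fun z hz => ?_).trans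
      Finset.card_image_le
    rw [mem_neighborFinset] at hz
    obtain ⟨k, rfl, hk⟩ := Walk.mem_support_iff_exists_getVert.1 (hu z hz)
    obtain _ | k := k
    · simp at hz
    · exact Finset.mem_image.2 ⟨k, by simpa [hNu] using ⟨hk, hz⟩, rfl⟩
  have hcv : G.minDegree ≤ Nv.card := by
    refine (G.minDegree_le_degree v).trans ?_
    rw [← card_neighborFinset_eq_degree]
    refine (Finset.card_le_card (t := Nv.image P.getVert) fun z hz => ?_).trans
      Finset.card_image_le
    rw [mem_neighborFinset] at hz
    obtain ⟨k, rfl, hk⟩ := Walk.mem_support_iff_exists_getVert.1 (hv z hz)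
    obtain rfl | hk := hk.eq_or_lt
    · simp at hz
    · exact Finset.mem_image.2 ⟨k, by simpa [hNv] using ⟨hk, hz⟩, rfl⟩
  have hlen : Nu.card ≤ P.length := (Finset.card_filter_le _ _).trans_eq (Finset.card_range _)
  rcases Nat.lt_or_ge d 2 with hd2 | hd2
  · obtain ⟨w, c, hc, hlen⟩ := hP.exists_isCycle_of_crossing (by omega) hid hui hvi (by omega)
    refine Or.inr (hc.isHamiltonian_of_forall_isPath h.connected fun x y p hp => ?_)
    have := hmax x y p hp
    omega
  left
  have hdisj : Disjoint (Nu.erase (i + d - 1)) Nv := by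
    rw [Finset.disjoint_left]
    intro k hk hk'
    simp only [hNu, hNv, Finset.mem_erase, Finset.mem_filter, Finset.mem_range] at hk hk'
    have := hmin k (k + 1) (by omega) (by omega) hk.2.2 hk'.2
    omega
  have hsub : Nu.erase (i + d - 1) ∪ Nv ⊆ Finset.range (i + 1) ∪ Finset.Ico (i + d) P.length := by
    intro k hk
    simp only [hNu, hNv, Finset.mem_union, Finset.mem_erase, Finset.mem_filter, Finset.mem_range,
      Finset.mem_Ico] at hk ⊢
    by_contra hk'
    rcases hk with ⟨hne, hk, hadj⟩ | ⟨hk, hadj⟩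
    · have := hmin i (k + 1) (by omega) (by omega) hadj hvi
      omega
    · have := hmin k (i + d) (by omega) (by omega) hui hadj
      omega
  have hcard := (Finset.card_le_card hsub).trans (Finset.card_union_le _ _)
  rw [Finset.card_union_of_disjoint hdisj, Finset.card_range, Nat.card_Ico] at hcard
  have := Finset.pred_card_le_card_erase (s := Nu) (a := i + d - 1)
  obtain ⟨w, c, hc, hlen⟩ := hP.exists_isCycle_of_crossing (by omega) hid hui hvi (by omega)
  exact ⟨w, c, hc, by omega⟩

/-- If the neighbours of the two ends of a path do not cross, there is a cycle through all of
them. -/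
lemma exists_isCycle_of_not_crossing (h : TwoConnected G) {u v : V} {P : G.Walk u v}
    (hP : P.IsPath) (hu : ∀ z, G.Adj u z → z ∈ P.support) (hv : ∀ z, G.Adj v z → z ∈ P.support)
    (hcross : ∀ i j, i < j → j ≤ P.length → G.Adj u (P.getVert j) → ¬ G.Adj v (P.getVert i)) :
    ∃ (w : V) (c : G.Walk w w), c.IsCycle ∧ 2 * G.minDegree ≤ c.length := by
  have hδ := h.two_le_minDegree
  have hinj : ∀ k l, k ≤ P.length → l ≤ P.length → P.getVert k = P.getVert l → k = l :=
    fun k l hk hl e => hP.getVert_injOn hk hl e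
  have h0 := P.getVert_zero
  have hm := P.getVert_length
  obtain ⟨a, ha, hua, hamax⟩ : ∃ a ≤ P.length, G.Adj u (P.getVert a) ∧
      ∀ k ≤ P.length, G.Adj u (P.getVert k) → k ≤ a := by
    obtain ⟨x, hx, -⟩ := h.exists_ne_ne u u
    obtain ⟨z, hz, -⟩ := h.exists_adj_ne hx.symm
    obtain ⟨k, rfl, hk⟩ := Walk.mem_support_iff_exists_getVert.1 (hu z hz)
    exact ⟨_, Nat.findGreatest_le _,
      Nat.findGreatest_spec (P := fun k => G.Adj u (P.getVert k)) hk hz,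
      fun l hl hl' => Nat.le_findGreatest hl hl'⟩
  obtain ⟨b, hb, hvb, hbmin⟩ : ∃ b ≤ P.length, G.Adj v (P.getVert b) ∧
      ∀ k, G.Adj v (P.getVert k) → b ≤ k := by
    obtain ⟨x, hx, -⟩ := h.exists_ne_ne v v
    obtain ⟨z, hz, -⟩ := h.exists_adj_ne hx.symm
    obtain ⟨k, rfl, hk⟩ := Walk.mem_support_iff_exists_getVert.1 (hv z hz)
    have hex : ∃ k, G.Adj v (P.getVert k) := ⟨k, hz⟩
    exact ⟨_, (Nat.find_min' hex hz).trans hk, Nat.find_spec hex, fun l hl => Nat.find_min' hex hl⟩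
  have hab : a ≤ b := by
    by_contra hlt
    exact hcross b a (by omega) ha hua hvb
  have ha0 : 0 < a := Nat.pos_of_ne_zero fun e => by simp [e] at hua
  have hbm : b < P.length := lt_of_le_of_ne hb fun e => by simp [e] at hvb
  obtain ⟨Q, hQ, hQs⟩ := hP.exists_segment hab hb
  obtain ⟨RA, hRA, hRAs⟩ := hP.exists_segment (Nat.zero_le a) ha
  obtain ⟨RB, hRB, hRBs⟩ := hP.exists_segment hb le_rfl
  have hAB : ∀ z ∈ RA.support, z ∈ RB.support → z = P.getVert b := by
    intro z hz hz'
    obtain ⟨k, -, hk, rfl⟩ := (hRAs z).1 hz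
    obtain ⟨l, hl, hl', e⟩ := (hRBs _).1 hz'
    have := hinj l k hl' (by omega) e
    exact congrArg _ (by omega)
  have hsep : ∀ w, ∃ x ∈ {z | z ∈ RA.support}, ∃ y ∈ {z | z ∈ RB.support},
      ∃ r : G.Walk x y, w ∉ r.support := by
    intro w
    have hA : ∃ x ∈ RA.support, x ≠ w := by
      by_cases e : P.getVert 0 = w
      · refine ⟨_, RA.end_mem_support, fun e' => ?_⟩
        have := hinj _ _ ha (by omega) (e'.trans e.symm)
        omega
      · exact ⟨_, RA.start_mem_support, e⟩
    have hB : ∃ x ∈ RB.support, x ≠ w := by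
      by_cases e : P.getVert b = w
      · refine ⟨_, RB.end_mem_support, fun e' => ?_⟩
        have := hinj _ _ le_rfl hb (e'.trans e.symm)
        omega
      · exact ⟨_, RB.start_mem_support, e⟩
    obtain ⟨x, hx, hxw⟩ := hA
    obtain ⟨y, hy, hyw⟩ := hB
    exact ⟨x, hx, y, hy, h.exists_walk hxw hyw⟩
  obtain ⟨s, t, y, p, q, hp, hq, hs, ht, hst, hy, hpq, hpA, hpB, hqA, hqB⟩ :=
    hQ.exists_disjoint_paths {z | z ∈ RB.support} hsep RA.end_mem_support RB.start_mem_support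
      (by
        intro z hz hz'
        obtain ⟨k, hk, hk', rfl⟩ := (hQs z).1 hz
        obtain ⟨l, hl, hl', e⟩ := (hRAs _).1 hz'
        have := hinj l k (by omega) (by omega) e
        exact congrArg _ (by omega))
      (by
        intro z hz hz'
        obtain ⟨k, hk, hk', rfl⟩ := (hQs z).1 hz
        obtain ⟨l, hl, hl', e⟩ := (hRBs _).1 hz'
        have := hinj l k (by omega) (by omega) e
        exact congrArg _ (by omega))
  simp only [Set.mem_ofPred_eq] at hs ht hy hpA hpB hqA hqB
  have hyb : y ≠ P.getVert b := by
    rintro rfl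
    exact hpq _ p.end_mem_support q.end_mem_support
  have hts : s ≠ t := by
    rintro rfl
    exact hpq _ p.start_mem_support q.start_mem_support
  obtain ⟨Y, hY, hYB, hYv⟩ := hRB.reverse.exists_isPath_neighbors (t := y) (by rwa [hm])
    (by simpa using hy) hyb
  simp only [Walk.support_reverse, List.mem_reverse] at hYB hYv
  obtain ⟨X, hX, hXA, hXu⟩ : ∃ X : G.Walk t s, X.IsPath ∧ (∀ z ∈ X.support, z ∈ RA.support) ∧
      ∀ z ∈ RA.support, z = P.getVert 0 ∨ G.Adj (P.getVert 0) z → z ∈ X.support := by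
    rcases hst with rfl | rfl
    · exact hRA.exists_isPath_neighbors (by rwa [h0]) ht hts.symm
    · obtain ⟨X, hX, hXA, hXu⟩ := hRA.exists_isPath_neighbors (by rwa [h0]) hs hts
      exact ⟨X.reverse, hX.reverse, by simpa using hXA, by simpa using hXu⟩
  have hYq : (Y.reverse.append q.reverse).IsPath :=
    hY.reverse.append_of_inter hq.reverse fun z hz hz' =>
      hqB z (by simpa using hz') (hYB z (by simpa using hz))
  have hW : (p.append (Y.reverse.append q.reverse)).IsPath := by
    refine hp.append_of_inter hYq fun z hz hz' => ?_
    simp only [Walk.mem_support_append_iff, Walk.support_reverse, List.mem_reverse] at hz'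
    rcases hz' with hz' | hz'
    · exact hpB z hz (hYB z hz')
    · exact absurd hz' (hpq z hz)
  have hNu : ∀ z ∈ insert u (G.neighborFinset u), z ∈ RA.support ∧ z ∈ X.support := by
    intro z hz
    rw [Finset.mem_insert, mem_neighborFinset] at hz
    have : z ∈ RA.support := by
      rcases hz with rfl | hz
      · exact (hRAs _).2 ⟨0, le_rfl, by omega, h0⟩
      · obtain ⟨k, rfl, hk⟩ := Walk.mem_support_iff_exists_getVert.1 (hu z hz)
        exact (hRAs _).2 ⟨k, by omega, hamax k hk hz, rfl⟩
    exact ⟨this, hXu z this (by rwa [h0])⟩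
  have hNv : ∀ z ∈ insert v (G.neighborFinset v), z ∈ RB.support ∧ z ∈ Y.support := by
    intro z hz
    rw [Finset.mem_insert, mem_neighborFinset] at hz
    have : z ∈ RB.support := by
      rcases hz with rfl | hz
      · exact (hRBs _).2 ⟨P.length, hb, le_rfl, hm⟩
      · obtain ⟨k, rfl, hk⟩ := Walk.mem_support_iff_exists_getVert.1 (hv z hz)
        exact (hRBs _).2 ⟨k, hbmin k hz, hk, rfl⟩
    exact ⟨this, hYv z this (by rwa [hm])⟩
  have hcard : 2 * G.minDegree + 1 ≤
      (insert u (G.neighborFinset u) ∪ insert v (G.neighborFinset v)).card := by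
    have hui := Finset.card_union_add_card_inter (insert u (G.neighborFinset u))
      (insert v (G.neighborFinset v))
    have hi : (insert u (G.neighborFinset u) ∩ insert v (G.neighborFinset v)).card ≤ 1 := by
      refine Finset.card_le_card (t := {P.getVert b}) fun z hz => ?_
      rw [Finset.mem_inter] at hz
      exact Finset.mem_singleton.2 (hAB z (hNu z hz.1).1 (hNv z hz.2).1)
    rw [Finset.card_insert_of_notMem (by simp), Finset.card_insert_of_notMem (by simp),
      card_neighborFinset_eq_degree, card_neighborFinset_eq_degree] at hui
    have := G.minDegree_le_degree u
    have := G.minDegree_le_degree v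
    omega
  obtain ⟨w, c, hc, hlen⟩ := hW.exists_isCycle_of_inter hX hts
    (S := insert u (G.neighborFinset u) ∪ insert v (G.neighborFinset v))
    (by
      intro z hz hzX
      have hzA := hXA z hzX
      simp only [Walk.mem_support_append_iff, Walk.support_reverse, List.mem_reverse] at hz
      rcases hz with hz | hz | hz
      · exact Or.inl (hpA z hz hzA)
      · obtain rfl := hAB z hzA (hYB z hz)
        exact Or.inl (hpA _ p.end_mem_support hzA)
      · exact Or.inr (hqA z hz hzA))
    (by
      intro z hz
      rcases Finset.mem_union.1 hz with hz | hz
      · exact Or.inr (hNu z hz).2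
      · left
        simp only [Walk.mem_support_append_iff, Walk.support_reverse, List.mem_reverse]
        exact Or.inr (Or.inl (hNv z hz).2))
    (by omega)
  exact ⟨w, c, hc, by omega⟩

end TwoConnected

/-- Dirac's theorem: a simple 2-connected graph with minimum degree δ and at least 3
vertices contains a cycle of length at least 2δ or a Hamilton cycle. -/
theorem stmt_0 {V : Type*} [Fintype V] [DecidableEq V] (G : SimpleGraph V) [DecidableRel G.Adj]
    (h2 : TwoConnected G) (h3 : 3 ≤ Fintype.card V) :
    (∃ (v : V) (c : G.Walk v v), c.IsCycle ∧ 2 * G.minDegree ≤ c.length) ∨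
      G.IsHamiltonian := by
  have : Nonempty V := h2.connected.nonempty
  obtain ⟨u, v, P, hP, hmax⟩ := Walk.exists_isPath_forall_isPath_length_le_length G
  have hu : ∀ z, G.Adj u z → z ∈ P.support := by
    intro z hz
    by_contra hzP
    have := hmax _ _ _ (hP.cons hzP (h := hz.symm))
    simp at this
  have hv : ∀ z, G.Adj v z → z ∈ P.support := by
    intro z hz
    by_contra hzP
    have := hmax _ _ _ (hP.concat hzP hz)
    simp at this
  by_cases hcross : ∃ i j, i < j ∧ j ≤ P.length ∧ G.Adj u (P.getVert j) ∧ G.Adj v (P.getVert i)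
  · exact h2.exists_isCycle_of_crossing hP hmax hu hv hcross
  · push Not at hcross
    exact Or.inl (h2.exists_isCycle_of_not_crossing hP hu hv hcross)
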